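/- Let d ≥ 3 and let Ψ be a random vector with the uniform distribution on the sphere of radius √d centered at the origin in ℝ^d. Then for all unit vectors u, v ∈ ℝ^d and every ℓ ∈ (0, 4): E[(v'Ψ)²·1(|u'Ψ| ≤ ℓ)] ≤ 4ℓ. -/

import Mathlib

open MeasureTheory Matrix

noncomputable section

/-- The Euclidean norm of a vector in `Fin d → ℝ`. -/
def eNorm {d : ℕ} (x : Fin d → ℝ) : ℝ := Real.sqrt (∑ i, x i ^ 2)

/-- `F` is the uniform (rotation-invariant) probability distribution on the sphere of radius
`√d` centered at the origin in `ℝ^d`. -/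
def IsUniformOnSphere (d : ℕ) (F : Measure (Fin d → ℝ)) : Prop :=
  IsProbabilityMeasure F ∧
    F {x | ∑ i, x i ^ 2 = (d : ℝ)} = 1 ∧
    ∀ O : Matrix (Fin d) (Fin d) ℝ, Oᵀ * O = 1 → F.map (fun x => O *ᵥ x) = F

/-!
Rotation invariance makes the reflections of the plane spanned by an orthonormal pair `u, w` leave
`E[w'Ψ g(u'Ψ)]` unchanged. Differentiating along the family of these reflections gives Stein's
identity `E[(w'Ψ)² g'(u'Ψ)] = E[u'Ψ g(u'Ψ)]`. Choosing `g' ≥ 1` on `[-ℓ, ℓ]` with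
`|g| ≤ πℓ` bounds `E[(w'Ψ)² 1(|u'Ψ| ≤ ℓ)]` by `πℓ E|u'Ψ| ≤ πℓ`, since `E[(u'Ψ)²] = 1`. A general
unit vector is `v = c u + w` with `w ⟂ u`, the cross term vanishes by the symmetry `w ↦ -w`, and the
contribution of `u` itself is trivially at most `ℓ E|u'Ψ|`.
-/

open scoped RealInnerProductSpace

section CompactSupport

variable {X : Type*} [TopologicalSpace X] [MeasurableSpace X] [OpensMeasurableSpace X]
  {ν : Measure X} [IsFiniteMeasure ν] {K : Set X}

lemma integrable_of_continuous_of_ae_mem_isCompact (hK : IsCompact K) (hνK : ∀ᵐ x ∂ν, x ∈ K)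
    {f : X → ℝ} (hf : Continuous f) : Integrable f ν := by
  obtain ⟨C, hC⟩ := hK.exists_bound_of_continuousOn hf.continuousOn
  exact .of_bound hf.aestronglyMeasurable C (hνK.mono hC)

lemma hasDerivAt_integral_of_ae_mem_isCompact (hK : IsCompact K) (hνK : ∀ᵐ x ∂ν, x ∈ K)
    {F F' : ℝ → X → ℝ} (hF : ∀ t, Continuous (F t)) (hF' : Continuous (Function.uncurry F'))
    (hderiv : ∀ t x, HasDerivAt (F · x) (F' t x) t) (t₀ : ℝ) :
    HasDerivAt (fun t ↦ ∫ x, F t x ∂ν) (∫ x, F' t₀ x ∂ν) t₀ := by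
  obtain ⟨C, hC⟩ := ((isCompact_closedBall t₀ 1).prod hK).exists_bound_of_continuousOn
    hF'.continuousOn
  exact (hasDerivAt_integral_of_dominated_loc_of_deriv_le (Metric.closedBall_mem_nhds t₀ one_pos)
    (.of_forall fun t ↦ (hF t).aestronglyMeasurable)
    (integrable_of_continuous_of_ae_mem_isCompact hK hνK (hF t₀))
    (hF'.uncurry_left t₀).aestronglyMeasurable
    (hνK.mono fun x hx t ht ↦ hC (t, x) ⟨ht, hx⟩) (integrable_const C)
    (.of_forall fun x t _ ↦ hderiv t x)).2

end CompactSupport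

section PlaneReflection

variable {E : Type*} [NormedAddCommGroup E] [InnerProductSpace ℝ E]

lemma exists_linearIsometryEquiv_reflect_plane {u w : E} (hu : ‖u‖ = 1) (hw : ‖w‖ = 1)
    (huw : ⟪u, w⟫ = 0) (t : ℝ) :
    ∃ L : E ≃ₗᵢ[ℝ] E, L u = Real.cos t • u + Real.sin t • w ∧
      L w = Real.sin t • u - Real.cos t • w := by
  obtain ⟨s, rfl⟩ : ∃ s, t = 2 * s := ⟨t / 2, by ring⟩
  set m := Real.cos s • u + Real.sin s • w with hm
  have hmm : ‖m‖ = 1 := by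
    rw [← sq_eq_sq₀ (norm_nonneg _) zero_le_one, hm, norm_add_sq_real]
    simp [norm_smul, real_inner_smul_left, real_inner_smul_right, hu, hw, huw]
  have hmu : ⟪m, u⟫ = Real.cos s := by
    simp [hm, inner_add_left, inner_smul_left, hu, real_inner_comm u w, huw]
  have hmw : ⟪m, w⟫ = Real.sin s := by
    simp [hm, inner_add_left, inner_smul_left, hw, huw]
  refine ⟨(ℝ ∙ m).reflection, ?_, ?_⟩
  · rw [Submodule.reflection_singleton_apply, hmu, hmm, Real.cos_two_mul, Real.sin_two_mul, hm]
    simp only [Real.ringHom_apply, one_pow, div_one, smul_add]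
    module
  · rw [Submodule.reflection_singleton_apply, hmw, hmm, Real.cos_two_mul', Real.sin_two_mul, hm]
    have := Real.sin_sq_add_cos_sq s
    simp only [Real.ringHom_apply, one_pow, div_one, smul_add]
    match_scalars <;> linarith

end PlaneReflection

section ScaledArctan

/-- A bounded `C¹` function of slope at least `1` on `[-ℓ, ℓ]`, the test function to which Stein's
identity is applied. -/
def scaledArctan (ℓ s : ℝ) : ℝ := 2 * ℓ * Real.arctan (s / ℓ)

lemma contDiff_scaledArctan (ℓ : ℝ) {n : WithTop ℕ∞} : ContDiff ℝ n (scaledArctan ℓ) :=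
  contDiff_const.mul (Real.contDiff_arctan.comp (contDiff_id.div_const ℓ))

lemma abs_scaledArctan_le {ℓ : ℝ} (hℓ : 0 ≤ ℓ) (s : ℝ) : |scaledArctan ℓ s| ≤ Real.pi * ℓ := by
  have harctan : |Real.arctan (s / ℓ)| ≤ Real.pi / 2 :=
    abs_le.2 ⟨(Real.neg_pi_div_two_lt_arctan _).le, (Real.arctan_lt_pi_div_two _).le⟩
  calc |scaledArctan ℓ s| = 2 * ℓ * |Real.arctan (s / ℓ)| := by
        rw [scaledArctan, abs_mul, abs_of_nonneg (by positivity)]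
    _ ≤ 2 * ℓ * (Real.pi / 2) := by gcongr
    _ = Real.pi * ℓ := by ring

lemma deriv_scaledArctan {ℓ : ℝ} (hℓ : ℓ ≠ 0) (s : ℝ) :
    deriv (scaledArctan ℓ) s = 2 / (1 + (s / ℓ) ^ 2) := by
  refine ((((hasDerivAt_id s).div_const ℓ).arctan.const_mul (2 * ℓ)).congr_deriv ?_).deriv
  simp only [id]
  field_simp

lemma ite_abs_le_deriv_scaledArctan {ℓ : ℝ} (hℓ : 0 < ℓ) (s : ℝ) :
    (if |s| ≤ ℓ then 1 else 0) ≤ deriv (scaledArctan ℓ) s := by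
  rw [deriv_scaledArctan hℓ.ne']
  split_ifs with hs
  · have hsℓ : (s / ℓ) ^ 2 ≤ 1 := by
      rwa [sq_le_one_iff_abs_le_one, abs_div, abs_of_pos hℓ, div_le_one hℓ]
    rw [le_div_iff₀ (by positivity)]
    linarith
  · positivity

end ScaledArctan

section Moments

lemma measurable_ite_abs_le (ℓ : ℝ) : Measurable fun s : ℝ ↦ if |s| ≤ ℓ then (1 : ℝ) else 0 :=
  .ite (measurableSet_le measurable_abs measurable_const) measurable_const measurable_const

variable {Ω : Type*} [MeasurableSpace Ω] {μ : Measure Ω} {X : Ω → ℝ}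

lemma integral_sq_mul_ite_abs_le (hX : Integrable X μ) {ℓ : ℝ} (hℓ : 0 ≤ ℓ) :
    ∫ ω, X ω ^ 2 * (if |X ω| ≤ ℓ then 1 else 0) ∂μ ≤ ℓ * ∫ ω, |X ω| ∂μ := by
  rw [← integral_const_mul]
  refine integral_mono_of_nonneg (.of_forall fun ω ↦ ?_) (hX.abs.const_mul ℓ)
    (.of_forall fun ω ↦ ?_)
  · dsimp only [Pi.zero_apply]
    positivity
  · dsimp only
    split_ifs with hω
    · rw [mul_one, ← sq_abs, sq]
      gcongr
    · rw [mul_zero]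
      positivity

lemma integral_abs_le_one_of_integral_sq_eq_one [IsProbabilityMeasure μ]
    (hX : ∫ ω, X ω ^ 2 ∂μ = 1) : ∫ ω, |X ω| ∂μ ≤ 1 := by
  have hX_int : Integrable (fun ω ↦ X ω ^ 2) μ := .of_integral_ne_zero (by simp [hX])
  calc ∫ ω, |X ω| ∂μ ≤ ∫ ω, (1 + X ω ^ 2) / 2 ∂μ :=
        integral_mono_of_nonneg (.of_forall fun ω ↦ abs_nonneg _)
          (((integrable_const 1).add hX_int).div_const 2)
          (.of_forall fun ω ↦ by nlinarith [sq_abs (X ω), sq_nonneg (|X ω| - 1)])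
    _ = 1 := by
        rw [integral_div, integral_add (integrable_const 1) hX_int, hX]
        norm_num

end Moments

/-- Invariance of a measure on an inner product space under all linear isometries, hence under
reflections as well as rotations. -/
def IsRotationInvariant {E : Type*} [NormedAddCommGroup E] [InnerProductSpace ℝ E]
    [MeasurableSpace E] (ν : Measure E) : Prop :=
  ∀ L : E ≃ₗᵢ[ℝ] E, MeasurePreserving L ν ν

namespace IsRotationInvariant

variable {E : Type*} [NormedAddCommGroup E] [InnerProductSpace ℝ E] [MeasurableSpace E]
  [BorelSpace E] {ν : Measure E}

lemma integral_comp (hν : IsRotationInvariant ν) (L : E ≃ₗᵢ[ℝ] E) (f : E → ℝ) :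
    ∫ x, f (L x) ∂ν = ∫ x, f x ∂ν :=
  (hν L).integral_comp L.toHomeomorph.measurableEmbedding f

lemma integral_inner_map (hν : IsRotationInvariant ν) (L : E ≃ₗᵢ[ℝ] E) (f : ℝ → ℝ → ℝ)
    (u w : E) :
    ∫ x, f ⟪L u, x⟫ ⟪L w, x⟫ ∂ν = ∫ x, f ⟪u, x⟫ ⟪w, x⟫ ∂ν := by
  rw [← hν.integral_comp L]
  simp only [LinearIsometryEquiv.inner_map_map]

lemma integral_inner_sq_congr (hν : IsRotationInvariant ν) {u v : E} (huv : ‖u‖ = ‖v‖) :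
    ∫ x, ⟪u, x⟫ ^ 2 ∂ν = ∫ x, ⟪v, x⟫ ^ 2 ∂ν := by
  rw [← hν.integral_inner_map (ℝ ∙ (u - v))ᗮ.reflection (fun a _ ↦ a ^ 2) u u,
    Submodule.reflection_sub huv]

lemma integral_mul_inner_eq_zero (hν : IsRotationInvariant ν) {u w : E} (huw : ⟪u, w⟫ = 0)
    (f : ℝ → ℝ) : ∫ x, f ⟪u, x⟫ * ⟪w, x⟫ ∂ν = 0 := by
  have hu : (ℝ ∙ w)ᗮ.reflection u = u := Submodule.reflection_mem_subspace_eq_self <|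
    Submodule.mem_orthogonal_singleton_iff_inner_left.2 huw
  have hodd := hν.integral_inner_map (ℝ ∙ w)ᗮ.reflection (fun a b ↦ f a * b) u w
  simp only [hu, Submodule.reflection_orthogonalComplement_singleton_eq_neg, inner_neg_left,
    mul_neg, integral_neg] at hodd
  linarith

lemma finrank_mul_integral_inner_sq [FiniteDimensional ℝ E] (hν : IsRotationInvariant ν)
    (hint : Integrable (fun x ↦ ‖x‖ ^ 2) ν) {u : E} (hu : ‖u‖ = 1) :
    Module.finrank ℝ E * ∫ x, ⟪u, x⟫ ^ 2 ∂ν = ∫ x, ‖x‖ ^ 2 ∂ν := by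
  let b := stdOrthonormalBasis ℝ E
  have hint_coord (i) : Integrable (fun x ↦ ⟪b i, x⟫ ^ 2) ν :=
    hint.mono' (by fun_prop : Continuous fun x ↦ ⟪b i, x⟫ ^ 2).aestronglyMeasurable <|
      .of_forall fun x ↦ by
        rw [norm_pow]
        gcongr
        simpa [b.norm_eq_one i] using norm_inner_le_norm (𝕜 := ℝ) (b i) x
  calc Module.finrank ℝ E * ∫ x, ⟪u, x⟫ ^ 2 ∂ν
      = ∑ i, ∫ x, ⟪b i, x⟫ ^ 2 ∂ν := by
        simp only [fun i ↦ hν.integral_inner_sq_congr ((b.norm_eq_one i).trans hu.symm),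
          Finset.sum_const, Finset.card_univ, Fintype.card_fin, nsmul_eq_mul]
    _ = ∫ x, ∑ i, ⟪b i, x⟫ ^ 2 ∂ν := (integral_finsetSum _ fun i _ ↦ hint_coord i).symm
    _ = ∫ x, ‖x‖ ^ 2 ∂ν := by
        simp only [← b.sum_sq_norm_inner_right, Real.norm_eq_abs, sq_abs]

variable [IsFiniteMeasure ν] {K : Set E}

lemma integral_inner_sq_mul_deriv_of_norm_eq_one (hν : IsRotationInvariant ν) (hK : IsCompact K)
    (hνK : ∀ᵐ x ∂ν, x ∈ K) {u w : E} (hu : ‖u‖ = 1) (hw : ‖w‖ = 1) (huw : ⟪u, w⟫ = 0)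
    {g : ℝ → ℝ} (hg : ContDiff ℝ 1 g) :
    ∫ x, ⟪w, x⟫ ^ 2 * deriv g ⟪u, x⟫ ∂ν = ∫ x, ⟪u, x⟫ * g ⟪u, x⟫ ∂ν := by
  have hg_cont : Continuous g := hg.continuous
  have : Continuous (deriv g) := hg.continuous_deriv le_rfl
  let A (t : ℝ) (x : E) : ℝ := Real.cos t * ⟪u, x⟫ + Real.sin t * ⟪w, x⟫
  let B (t : ℝ) (x : E) : ℝ := Real.sin t * ⟪u, x⟫ - Real.cos t * ⟪w, x⟫
  have hA (t x) : HasDerivAt (A · x) (-B t x) t :=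
    (((Real.hasDerivAt_cos t).mul_const _).add ((Real.hasDerivAt_sin t).mul_const _)).congr_deriv
      (by ring)
  have hB (t x) : HasDerivAt (B · x) (A t x) t :=
    (((Real.hasDerivAt_sin t).mul_const _).sub ((Real.hasDerivAt_cos t).mul_const _)).congr_deriv
      (by ring)
  have hconst (t) : ∫ x, B t x * g (A t x) ∂ν = ∫ x, ⟪w, x⟫ * g ⟪u, x⟫ ∂ν := by
    obtain ⟨L, hLu, hLw⟩ := exists_linearIsometryEquiv_reflect_plane hu hw huw t
    rw [← hν.integral_inner_map L (fun a b ↦ b * g a), hLu, hLw]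
    simp only [A, B, inner_add_left, inner_sub_left, real_inner_smul_left]
  have hderiv := hasDerivAt_integral_of_ae_mem_isCompact hK hνK
    (F := fun t x ↦ B t x * g (A t x))
    (F' := fun t x ↦ A t x * g (A t x) - B t x ^ 2 * deriv g (A t x))
    (fun t ↦ by fun_prop) (by unfold Function.uncurry; fun_prop)
    (fun t x ↦ ((hB t x).mul
      ((hg.differentiable one_ne_zero _).hasDerivAt.comp t (hA t x))).congr_deriv (by
        simp only [Function.comp_apply]
        ring)) 0
  have hzero := hderiv.unique ((hasDerivAt_const _ _).congr_of_eventuallyEq (.of_forall hconst))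
  simp only [A, B, Real.cos_zero, Real.sin_zero, one_mul, zero_mul, add_zero, zero_sub,
    neg_sq] at hzero
  rw [integral_sub (integrable_of_continuous_of_ae_mem_isCompact hK hνK (by fun_prop))
    (integrable_of_continuous_of_ae_mem_isCompact hK hνK (by fun_prop))] at hzero
  linarith

lemma integral_inner_sq_mul_deriv (hν : IsRotationInvariant ν) (hK : IsCompact K)
    (hνK : ∀ᵐ x ∂ν, x ∈ K) {u w : E} (hu : ‖u‖ = 1) (huw : ⟪u, w⟫ = 0)
    {g : ℝ → ℝ} (hg : ContDiff ℝ 1 g) :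
    ∫ x, ⟪w, x⟫ ^ 2 * deriv g ⟪u, x⟫ ∂ν = ‖w‖ ^ 2 * ∫ x, ⟪u, x⟫ * g ⟪u, x⟫ ∂ν := by
  obtain rfl | hw := eq_or_ne w 0
  · simp
  let e := ‖w‖⁻¹ • w
  have he : ‖e‖ = 1 := norm_smul_inv_norm hw
  have hwe (x : E) : ⟪w, x⟫ = ‖w‖ * ⟪e, x⟫ := by
    rw [real_inner_smul_left, mul_inv_cancel_left₀ (norm_ne_zero_iff.2 hw)]
  rw [← hν.integral_inner_sq_mul_deriv_of_norm_eq_one hK hνK hu he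
    (by rw [real_inner_smul_right, huw, mul_zero]) hg, ← integral_const_mul]
  simp only [hwe, mul_pow, mul_assoc]

lemma integral_inner_smul_add_sq_mul (hν : IsRotationInvariant ν) (hK : IsCompact K)
    (hνK : ∀ᵐ x ∂ν, x ∈ K) {u w : E} (huw : ⟪u, w⟫ = 0) (c : ℝ) {φ : ℝ → ℝ} (hφ : Measurable φ)
    {C : ℝ} (hφC : ∀ s, ‖φ s‖ ≤ C) :
    ∫ x, ⟪c • u + w, x⟫ ^ 2 * φ ⟪u, x⟫ ∂ν =
      c ^ 2 * ∫ x, ⟪u, x⟫ ^ 2 * φ ⟪u, x⟫ ∂ν + ∫ x, ⟪w, x⟫ ^ 2 * φ ⟪u, x⟫ ∂ν := by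
  have hint {f : E → ℝ} (hf : Continuous f) : Integrable (fun x ↦ f x * φ ⟪u, x⟫) ν :=
    (integrable_of_continuous_of_ae_mem_isCompact hK hνK hf).mul_bdd
      (hφ.comp (by fun_prop : Continuous fun x : E ↦ ⟪u, x⟫).measurable).aestronglyMeasurable
      (.of_forall fun x ↦ hφC _)
  have hu := hint (f := fun x ↦ ⟪u, x⟫ ^ 2) (by fun_prop)
  have hw := hint (f := fun x ↦ ⟪w, x⟫ ^ 2) (by fun_prop)
  have huw_int := hint (f := fun x ↦ ⟪u, x⟫ * ⟪w, x⟫) (by fun_prop)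
  have hsum : Integrable (fun x ↦ c ^ 2 * (⟪u, x⟫ ^ 2 * φ ⟪u, x⟫) +
      2 * c * (⟪u, x⟫ * ⟪w, x⟫ * φ ⟪u, x⟫)) ν := (hu.const_mul _).add (huw_int.const_mul _)
  have hcross : ∫ x, ⟪u, x⟫ * ⟪w, x⟫ * φ ⟪u, x⟫ ∂ν = 0 := by
    simpa only [mul_right_comm] using hν.integral_mul_inner_eq_zero huw fun s ↦ s * φ s
  calc ∫ x, ⟪c • u + w, x⟫ ^ 2 * φ ⟪u, x⟫ ∂ν
      = ∫ x, (c ^ 2 * (⟪u, x⟫ ^ 2 * φ ⟪u, x⟫) + 2 * c * (⟪u, x⟫ * ⟪w, x⟫ * φ ⟪u, x⟫)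
          + ⟪w, x⟫ ^ 2 * φ ⟪u, x⟫) ∂ν := by
        congr with x
        rw [inner_add_left, real_inner_smul_left]
        ring
    _ = _ := by
        rw [integral_add hsum hw,
          integral_add (hu.const_mul _) (huw_int.const_mul _), integral_const_mul,
          integral_const_mul, hcross, mul_zero, add_zero]

lemma integral_inner_sq_mul_ite_abs_inner_le_of_inner_eq_zero (hν : IsRotationInvariant ν)
    (hK : IsCompact K) (hνK : ∀ᵐ x ∂ν, x ∈ K) {u w : E} (hu : ‖u‖ = 1) (huw : ⟪u, w⟫ = 0)
    {ℓ : ℝ} (hℓ : 0 < ℓ) :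
    ∫ x, ⟪w, x⟫ ^ 2 * (if |⟪u, x⟫| ≤ ℓ then 1 else 0) ∂ν ≤
      ‖w‖ ^ 2 * (Real.pi * ℓ * ∫ x, |⟪u, x⟫| ∂ν) := by
  have hg : ContDiff ℝ 1 (scaledArctan ℓ) := contDiff_scaledArctan ℓ
  have hg_cont := hg.continuous
  have := hg.continuous_deriv le_rfl
  have hint {f : E → ℝ} (hf : Continuous f) : Integrable f ν :=
    integrable_of_continuous_of_ae_mem_isCompact hK hνK hf
  calc ∫ x, ⟪w, x⟫ ^ 2 * (if |⟪u, x⟫| ≤ ℓ then 1 else 0) ∂ν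
      ≤ ∫ x, ⟪w, x⟫ ^ 2 * deriv (scaledArctan ℓ) ⟪u, x⟫ ∂ν := by
        refine integral_mono_of_nonneg (.of_forall fun x ↦ ?_) (hint (by fun_prop))
          (.of_forall fun x ↦ ?_)
        · dsimp only [Pi.zero_apply]
          positivity
        · dsimp only
          gcongr
          exact ite_abs_le_deriv_scaledArctan hℓ _
    _ = ‖w‖ ^ 2 * ∫ x, ⟪u, x⟫ * scaledArctan ℓ ⟪u, x⟫ ∂ν :=
        hν.integral_inner_sq_mul_deriv hK hνK hu huw hg
    _ ≤ ‖w‖ ^ 2 * ∫ x, Real.pi * ℓ * |⟪u, x⟫| ∂ν := by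
        refine mul_le_mul_of_nonneg_left (integral_mono (hint (by fun_prop)) (hint (by fun_prop))
          fun x ↦ ?_) (sq_nonneg _)
        calc ⟪u, x⟫ * scaledArctan ℓ ⟪u, x⟫ ≤ |⟪u, x⟫| * |scaledArctan ℓ ⟪u, x⟫| := by
              rw [← abs_mul]
              exact le_abs_self _
          _ ≤ |⟪u, x⟫| * (Real.pi * ℓ) := by
              gcongr
              exact abs_scaledArctan_le hℓ.le _
          _ = Real.pi * ℓ * |⟪u, x⟫| := mul_comm _ _
    _ = ‖w‖ ^ 2 * (Real.pi * ℓ * ∫ x, |⟪u, x⟫| ∂ν) := by rw [integral_const_mul]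

lemma integral_inner_sq_mul_ite_abs_inner_le (hν : IsRotationInvariant ν) (hK : IsCompact K)
    (hνK : ∀ᵐ x ∂ν, x ∈ K) {u v : E} (hu : ‖u‖ = 1) (hv : ‖v‖ = 1) {ℓ : ℝ} (hℓ : 0 < ℓ) :
    ∫ x, ⟪v, x⟫ ^ 2 * (if |⟪u, x⟫| ≤ ℓ then 1 else 0) ∂ν ≤
      Real.pi * ℓ * ∫ x, |⟪u, x⟫| ∂ν := by
  obtain ⟨c, w, huw, rfl⟩ : ∃ (c : ℝ) (w : E), ⟪u, w⟫ = 0 ∧ v = c • u + w :=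
    ⟨⟪u, v⟫, v - ⟪u, v⟫ • u, by simp [inner_sub_right, real_inner_smul_right, hu], by abel⟩
  have hcw : c ^ 2 + ‖w‖ ^ 2 = 1 := by
    have := norm_add_sq_real (c • u) w
    simpa [hv, norm_smul, hu, real_inner_smul_left, huw, eq_comm] using this
  rw [hν.integral_inner_smul_add_sq_mul hK hνK huw c (φ := fun s ↦ if |s| ≤ ℓ then 1 else 0)
    (measurable_ite_abs_le ℓ) (C := 1) (fun s ↦ by split_ifs <;> simp)]
  calc c ^ 2 * ∫ x, ⟪u, x⟫ ^ 2 * (if |⟪u, x⟫| ≤ ℓ then 1 else 0) ∂ν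
        + ∫ x, ⟪w, x⟫ ^ 2 * (if |⟪u, x⟫| ≤ ℓ then 1 else 0) ∂ν
      ≤ c ^ 2 * (Real.pi * ℓ * ∫ x, |⟪u, x⟫| ∂ν)
        + ‖w‖ ^ 2 * (Real.pi * ℓ * ∫ x, |⟪u, x⟫| ∂ν) := by
        gcongr
        · exact (integral_sq_mul_ite_abs_le
            (integrable_of_continuous_of_ae_mem_isCompact hK hνK (by fun_prop)) hℓ.le).trans
            (by gcongr; exact le_mul_of_one_le_left hℓ.le (by linarith [Real.pi_gt_three]))
        · exact hν.integral_inner_sq_mul_ite_abs_inner_le_of_inner_eq_zero hK hνK hu huw hℓ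
    _ = Real.pi * ℓ * ∫ x, |⟪u, x⟫| ∂ν := by rw [← add_mul, hcw, one_mul]

end IsRotationInvariant

section EuclideanSpace

variable {d : ℕ}

lemma eNorm_eq_norm_toLp (x : Fin d → ℝ) : eNorm x = ‖WithLp.toLp 2 x‖ := by
  simp only [eNorm, EuclideanSpace.norm_eq, Real.norm_eq_abs, sq_abs]

lemma dotProduct_eq_inner_toLp {ι : Type*} [Fintype ι] (x y : ι → ℝ) :
    x ⬝ᵥ y = ⟪WithLp.toLp 2 x, WithLp.toLp 2 y⟫ := by
  simp [EuclideanSpace.inner_toLp_toLp, dotProduct_comm]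

lemma exists_orthogonal_mulVec_eq (L : EuclideanSpace ℝ (Fin d) ≃ₗᵢ[ℝ] EuclideanSpace ℝ (Fin d)) :
    ∃ O : Matrix (Fin d) (Fin d) ℝ, Oᵀ * O = 1 ∧
      ∀ x, L (WithLp.toLp 2 x) = WithLp.toLp 2 (O *ᵥ x) := by
  let b := EuclideanSpace.basisFun (Fin d) ℝ
  refine ⟨L.toMatrix b.toBasis b.toBasis,
    Matrix.mem_unitaryGroup_iff'.1 (L.toMatrix_mem_unitaryGroup b b), fun x ↦ ?_⟩
  change _ = Matrix.toEuclideanLin (LinearMap.toMatrix b.toBasis b.toBasis _) _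
  rw [Matrix.toEuclideanLin_eq_toLin_orthonormal, Matrix.toLin_toMatrix]
  rfl

/-- The law `F` transported to `EuclideanSpace`, since `Fin d → ℝ` carries the sup norm. -/
def euclideanLaw (F : Measure (Fin d → ℝ)) : Measure (EuclideanSpace ℝ (Fin d)) :=
  F.map (WithLp.toLp 2)

instance (F : Measure (Fin d → ℝ)) [IsProbabilityMeasure F] :
    IsProbabilityMeasure (euclideanLaw F) :=
  Measure.isProbabilityMeasure_map (WithLp.measurable_toLp 2 _).aemeasurable

lemma integral_euclideanLaw_map {Ω : Type*} [MeasurableSpace Ω] {μ : Measure Ω} {Ψ : Ω → Fin d → ℝ}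
    (hΨ : AEMeasurable Ψ μ) {f : EuclideanSpace ℝ (Fin d) → ℝ} (hf : Measurable f) :
    ∫ x, f x ∂euclideanLaw (μ.map Ψ) = ∫ ω, f (WithLp.toLp 2 (Ψ ω)) ∂μ := by
  rw [euclideanLaw, integral_map (WithLp.measurable_toLp 2 _).aemeasurable hf.aestronglyMeasurable,
    integral_map (f := fun x ↦ f (WithLp.toLp 2 x)) hΨ
      (hf.comp (WithLp.measurable_toLp 2 _)).aestronglyMeasurable]

namespace IsUniformOnSphere

variable {F : Measure (Fin d → ℝ)}

lemma isRotationInvariant (hF : IsUniformOnSphere d F) : IsRotationInvariant (euclideanLaw F) := by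
  intro L
  obtain ⟨O, hO, hL⟩ := exists_orthogonal_mulVec_eq L
  have hO_meas : Measurable (O *ᵥ ·) := (by fun_prop : Continuous (O *ᵥ ·)).measurable
  refine ⟨L.continuous.measurable, ?_⟩
  calc (euclideanLaw F).map L = F.map (WithLp.toLp 2 ∘ (O *ᵥ ·)) := by
        rw [euclideanLaw, Measure.map_map L.continuous.measurable (WithLp.measurable_toLp 2 _)]
        exact congrArg F.map (funext hL)
    _ = euclideanLaw F := by
        rw [← Measure.map_map (WithLp.measurable_toLp 2 _) hO_meas, hF.2.2 O hO, euclideanLaw]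

lemma ae_mem_sphere (hF : IsUniformOnSphere d F) :
    ∀ᵐ x ∂euclideanLaw F, x ∈ Metric.sphere 0 √d := by
  have := hF.1
  have hset : {x : Fin d → ℝ | ∑ i, x i ^ 2 = d} =
      WithLp.toLp 2 ⁻¹' Metric.sphere (0 : EuclideanSpace ℝ (Fin d)) √d := by
    ext x
    simp [EuclideanSpace.norm_eq, Real.sqrt_inj, Finset.sum_nonneg, sq_nonneg]
  have hmeas : MeasurableSet (Metric.sphere (0 : EuclideanSpace ℝ (Fin d)) √d) :=
    Metric.isClosed_sphere.measurableSet
  refine (ae_map_iff (WithLp.measurable_toLp 2 _).aemeasurable hmeas).2 ?_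
  exact (mem_ae_iff_prob_eq_one (WithLp.measurable_toLp 2 _ hmeas)).2 (hset ▸ hF.2.1)

lemma integral_inner_sq_eq_one (hF : IsUniformOnSphere d F) {u : EuclideanSpace ℝ (Fin d)}
    (hu : ‖u‖ = 1) : ∫ x, ⟪u, x⟫ ^ 2 ∂euclideanLaw F = 1 := by
  have := hF.1
  have hd : (d : ℝ) ≠ 0 := by
    rw [Nat.cast_ne_zero]
    rintro rfl
    simp [Subsingleton.elim u 0] at hu
  have hnorm : ∫ x, ‖x‖ ^ 2 ∂euclideanLaw F = d := by
    rw [integral_congr_ae (g := fun _ ↦ (d : ℝ)) (hF.ae_mem_sphere.mono fun x hx ↦ by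
      simp [mem_sphere_zero_iff_norm.1 hx])]
    simp
  have hmoment := hF.isRotationInvariant.finrank_mul_integral_inner_sq
    (integrable_of_continuous_of_ae_mem_isCompact (isCompact_sphere 0 √d) hF.ae_mem_sphere
      (by fun_prop)) hu
  rw [finrank_euclideanSpace_fin, hnorm] at hmoment
  exact mul_left_cancel₀ hd (hmoment.trans (mul_one _).symm)

end IsUniformOnSphere

end EuclideanSpace

theorem stmt_16_general {d : ℕ} {Ω : Type*} [MeasurableSpace Ω] {μ : Measure Ω}
    {Ψ : Ω → Fin d → ℝ} (hΨ : AEMeasurable Ψ μ) (hunif : IsUniformOnSphere d (μ.map Ψ))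
    {u v : Fin d → ℝ} (hu : eNorm u = 1) (hv : eNorm v = 1) {ℓ : ℝ} (hℓ : 0 < ℓ) :
    ∫ ω, (v ⬝ᵥ Ψ ω) ^ 2 * (if |u ⬝ᵥ Ψ ω| ≤ ℓ then 1 else 0) ∂μ ≤ Real.pi * ℓ := by
  have := hunif.1
  rw [eNorm_eq_norm_toLp] at hu hv
  simp only [dotProduct_eq_inner_toLp]
  rw [← integral_euclideanLaw_map hΨ
    (f := fun x ↦ ⟪WithLp.toLp 2 v, x⟫ ^ 2 * (if |⟪WithLp.toLp 2 u, x⟫| ≤ ℓ then 1 else 0))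
    (((by fun_prop : Measurable fun x ↦ ⟪WithLp.toLp 2 v, x⟫ ^ 2)).mul
      ((measurable_ite_abs_le ℓ).comp (by fun_prop)))]
  calc _ ≤ Real.pi * ℓ * ∫ x, |⟪WithLp.toLp 2 u, x⟫| ∂euclideanLaw (μ.map Ψ) :=
        hunif.isRotationInvariant.integral_inner_sq_mul_ite_abs_inner_le (isCompact_sphere 0 √d)
          hunif.ae_mem_sphere hu hv hℓ
    _ ≤ Real.pi * ℓ := mul_le_of_le_one_right (by positivity) <|
        integral_abs_le_one_of_integral_sq_eq_one (hunif.integral_inner_sq_eq_one hu)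

/-- If `Ψ` is uniform on the sphere of radius `√d` in `ℝ^d`, `d ≥ 3`, then for
all unit vectors `u, v` and `ℓ ∈ (0,4)`, `E[(v'Ψ)² 1(|u'Ψ| ≤ ℓ)] ≤ 4ℓ`. -/
theorem stmt_16 (d : ℕ) (hd : 3 ≤ d)
    (Ω : Type) [MeasurableSpace Ω] (μ : Measure Ω) [IsProbabilityMeasure μ]
    (Ψ : Ω → Fin d → ℝ) (hΨ : Measurable Ψ)
    (hunif : IsUniformOnSphere d (μ.map Ψ))
    (u v : Fin d → ℝ) (hu : eNorm u = 1) (hv : eNorm v = 1)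
    (ℓ : ℝ) (hℓ0 : 0 < ℓ) (hℓ4 : ℓ < 4) :
    ∫ ω, (v ⬝ᵥ Ψ ω) ^ 2 * (if |u ⬝ᵥ Ψ ω| ≤ ℓ then 1 else 0) ∂μ ≤ 4 * ℓ := by
  exact (stmt_16_general hΨ.aemeasurable hunif hu hv hℓ0).trans (by gcongr; exact Real.pi_le_four)
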